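/- Let Ω ⊂ ℝⁿ be a bounded Lipschitz domain, let F ∈ C¹(ℝ^{N×n}) be convex with ν|z| − L ≤ F(z) ≤ L(1+|z|) for all z, and let T₀ ∈ L^∞(Ω;ℝ^{N×n}) satisfy ess inf_{x∈Ω} min_{|ξ|=1} (F^∞(ξ) − T₀(x)·ξ) > 0. Then the duality correspondence inf_{w ∈ W^{1,1}(Ω;ℝ^N)} ∫_Ω (F(∇w) − T₀·∇w) dx = sup_{χ ∈ L^∞_⊥(Ω;ℝ^{N×n})} ( −∫_Ω F*(T₀ + χ) dx ) holds; in particular, the dual problem admits a (unique) solution. -/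

import Mathlib

open MeasureTheory Filter Topology Set
open scoped ENNReal RealInnerProductSpace

noncomputable section

/-- Euclidean space `ℝⁿ`. -/
abbrev EVec (n : ℕ) := EuclideanSpace ℝ (Fin n)

/-- Frobenius inner product of two "matrices". -/
def mdot {ι κ : Type*} [Fintype ι] [Fintype κ] (A B : ι → κ → ℝ) : ℝ :=
  ∑ a, ∑ i, A a i * B a i

/-- Frobenius norm. -/
noncomputable def mnorm {ι κ : Type*} [Fintype ι] [Fintype κ] (A : ι → κ → ℝ) : ℝ :=
  Real.sqrt (mdot A A)

/-- Euclidean norm of a vector given as a tuple. -/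
noncomputable def vnorm {ι : Type*} [Fintype ι] (v : ι → ℝ) : ℝ :=
  Real.sqrt (∑ a, v a ^ 2)

/-- `Ω ⊆ ℝⁿ` is a (nonempty, open, connected) Lipschitz domain: every boundary point has
a neighbourhood on which `Ω` can be flattened to a half space by a bi-Lipschitz map. -/
def IsLipschitzDomain {n : ℕ} (Ω : Set (EVec n)) : Prop :=
  IsOpen Ω ∧ Ω.Nonempty ∧ IsConnected Ω ∧
  ∀ x ∈ frontier Ω, ∃ (U : Set (EVec n)) (h hinv : EVec n → EVec n) (K : NNReal)
      (e : EVec n),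
    ‖e‖ = 1 ∧ IsOpen U ∧ x ∈ U ∧ LipschitzOnWith K h U ∧
    LipschitzOnWith K hinv (h '' U) ∧ (∀ y ∈ U, hinv (h y) = y) ∧
    h '' (U ∩ Ω) = (h '' U) ∩ {y : EVec n | 0 < ⟪e, y⟫}

/-- `Du` is the weak (distributional) gradient of `u` on `Ω`, and both are integrable;
i.e. `u ∈ W^{1,1}(Ω; ℝ^ι)` with weak gradient `Du`. -/
def HasWeakDerivOn {n : ℕ} {ι : Type*} [Fintype ι] (Ω : Set (EVec n))
    (u : EVec n → ι → ℝ) (Du : EVec n → ι → Fin n → ℝ) : Prop :=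
  IntegrableOn u Ω volume ∧ IntegrableOn Du Ω volume ∧
  ∀ φ : EVec n → ℝ, ContDiff ℝ 1 φ → HasCompactSupport φ → tsupport φ ⊆ Ω →
    ∀ (a : ι) (i : Fin n),
      ∫ x in Ω, u x a * fderiv ℝ φ x (EuclideanSpace.single i 1) =
        - ∫ x in Ω, Du x a i * φ x

/-- `u ∈ W^{1,2}(Ω;ℝ^ι)` with weak gradient `Du`. -/
def MemW12 {n : ℕ} {ι : Type*} [Fintype ι] (Ω : Set (EVec n))
    (u : EVec n → ι → ℝ) (Du : EVec n → ι → Fin n → ℝ) : Prop :=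
  HasWeakDerivOn Ω u Du ∧ IntegrableOn (fun x => vnorm (u x) ^ 2) Ω volume ∧
    IntegrableOn (fun x => mnorm (Du x) ^ 2) Ω volume

/-- vanishing mean value `(u)_Ω = 0`. -/
def ZeroMean {n : ℕ} {ι : Type*} [Fintype ι] (Ω : Set (EVec n))
    (u : EVec n → ι → ℝ) : Prop :=
  ∀ a : ι, ∫ x in Ω, u x a = 0

/-- The `L^∞(Ω)` norm of a matrix field (w.r.t. the pointwise Frobenius norm). -/
noncomputable def linfNormOn {n N : ℕ} (Ω : Set (EVec n))
    (T : EVec n → Fin N → Fin n → ℝ) : ℝ≥0∞ :=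
  essSup (fun x => ENNReal.ofReal (mnorm (T x))) (volume.restrict Ω)

/-- `T ∈ W^{1,∞}(Ω)`: bounded and Lipschitz on `Ω`. -/
def MemW1inf {n N : ℕ} (Ω : Set (EVec n)) (T : EVec n → Fin N → Fin n → ℝ) : Prop :=
  ∃ C : NNReal, (∀ x ∈ Ω, ‖T x‖ ≤ C) ∧ LipschitzOnWith C T Ω

/-- `T ∈ W^{2,∞}(Ω)`: `T` is bounded with bounded Lipschitz derivative on `Ω`. -/
def MemW2inf {n N : ℕ} (Ω : Set (EVec n)) (T : EVec n → Fin N → Fin n → ℝ) : Prop :=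
  ∃ (C : NNReal) (DT : EVec n → EVec n →L[ℝ] (Fin N → Fin n → ℝ)),
    (∀ x ∈ Ω, ‖T x‖ ≤ C) ∧ (∀ x ∈ Ω, HasFDerivWithinAt T (DT x) Ω x) ∧
    (∀ x ∈ Ω, ‖DT x‖ ≤ C) ∧ LipschitzOnWith C DT Ω

/-- The nonlinear map `A(z) = f'(|z|) z / |z|` (equal to `0` at `z = 0`). -/
noncomputable def Amap {N n : ℕ} (f' : ℝ → ℝ) (z : Fin N → Fin n → ℝ) :
    Fin N → Fin n → ℝ :=
  fun a i => (f' (mnorm z) / mnorm z) * z a i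

/-- `u` is a weak solution of the Neumann problem for the integrand `f(|·|)` and datum `T₀`. -/
def IsWeakSolution {n N : ℕ} (Ω : Set (EVec n)) (f' : ℝ → ℝ)
    (T₀ : EVec n → Fin N → Fin n → ℝ)
    (u : EVec n → Fin N → ℝ) (Du : EVec n → Fin N → Fin n → ℝ) : Prop :=
  HasWeakDerivOn Ω u Du ∧
  ∀ φ Dφ, HasWeakDerivOn Ω φ Dφ →
    ∫ x in Ω, mdot (Amap f' (Du x)) (Dφ x) = ∫ x in Ω, mdot (T₀ x) (Dφ x)

/-- The functional `𝔉[w] = ∫_Ω (f(|∇w|) − T₀ · ∇w) dx` (as a function of the gradient). -/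
noncomputable def FF {n N : ℕ} (Ω : Set (EVec n)) (f : ℝ → ℝ)
    (T₀ : EVec n → Fin N → Fin n → ℝ) (Du : EVec n → Fin N → Fin n → ℝ) : ℝ :=
  ∫ x in Ω, (f (mnorm (Du x)) - mdot (T₀ x) (Du x))

/-- The regularised functional `𝔉_k[w] = 𝔉[w] + (2k)⁻¹ ∫_Ω |∇w|² dx`. -/
noncomputable def FFk {n N : ℕ} (Ω : Set (EVec n)) (f : ℝ → ℝ)
    (T₀ : EVec n → Fin N → Fin n → ℝ) (k : ℕ)
    (Du : EVec n → Fin N → Fin n → ℝ) : ℝ :=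
  FF Ω f T₀ Du + (2 * (k : ℝ))⁻¹ * ∫ x in Ω, mnorm (Du x) ^ 2

end

/-- The functional `𝓕[w] = ∫_Ω (F(∇w) − T₀·∇w) dx` for a general integrand `F`. -/
noncomputable def FFgen {n N : ℕ} (Ω : Set (EVec n)) (F : (Fin N → Fin n → ℝ) → ℝ)
    (T₀ : EVec n → Fin N → Fin n → ℝ) (Du : EVec n → Fin N → Fin n → ℝ) : ℝ :=
  ∫ x in Ω, (F (Du x) - mdot (T₀ x) (Du x))

/-- The elementary matrix with a `1` in position `(a,i)`. -/
def basisMat {N n : ℕ} (a : Fin N) (i : Fin n) : Fin N → Fin n → ℝ :=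
  fun a' i' => if a' = a ∧ i' = i then 1 else 0

/-- The gradient `D_z F(z)` of `F : ℝ^{N×n} → ℝ`, as a matrix. -/
noncomputable def DFmat {N n : ℕ} (F : (Fin N → Fin n → ℝ) → ℝ)
    (z : Fin N → Fin n → ℝ) : Fin N → Fin n → ℝ :=
  fun a i => fderiv ℝ F z (basisMat a i)

/-- `χ ∈ L^∞_⊥(Ω;ℝ^{N×n})`: a bounded measurable matrix field which annihilates all
`W^{1,1}`-gradients. -/
def MemLinfPerp {n N : ℕ} (Ω : Set (EVec n)) (χ : EVec n → Fin N → Fin n → ℝ) : Prop :=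
  AEStronglyMeasurable χ (volume.restrict Ω) ∧ (∃ C : ℝ, ∀ x ∈ Ω, mnorm (χ x) ≤ C) ∧
  ∀ (w : EVec n → Fin N → ℝ) (Dw : EVec n → Fin N → Fin n → ℝ),
    HasWeakDerivOn Ω w Dw → ∫ x in Ω, mdot (χ x) (Dw x) = 0

/-- The shifted convex conjugate `F*(z*) + F(0) = sup_w (z*·w − F(w) + F(0)) ∈ [0,∞]`,
valued in `ℝ≥0∞` so that infeasible points (`F*(z*) = ∞`) are handled correctly. -/
noncomputable def FstarShift {N n : ℕ} (F : (Fin N → Fin n → ℝ) → ℝ)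
    (z : Fin N → Fin n → ℝ) : ℝ≥0∞ :=
  ⨆ w : Fin N → Fin n → ℝ, ENNReal.ofReal (mdot z w - F w + F 0)

/-- The dual functional `ℛ_{T₀}[χ] = −∫_Ω F*(T₀+χ) dx`, valued in `EReal` (it equals
`F(0)·|Ω| − ∫_Ω (F*(T₀+χ) + F(0)) dx`, where the last integrand is nonnegative and the
value is `−∞` if `F*(T₀+χ)` is not integrable). -/
noncomputable def Rdual {n N : ℕ} (Ω : Set (EVec n)) (F : (Fin N → Fin n → ℝ) → ℝ)
    (T₀ χ : EVec n → Fin N → Fin n → ℝ) : EReal :=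
  ((F 0 * (volume Ω).toReal : ℝ) : EReal) -
    ((∫⁻ x in Ω, FstarShift F (T₀ x + χ x) : ℝ≥0∞) : EReal)

theorem hb_sandwich {X : Type*} [NormedAddCommGroup X] [NormedSpace ℝ X] (J : X → ℝ)
    (hJ : ConvexOn ℝ Set.univ J) (hc : Continuous J) (V : Submodule ℝ X) (m : ℝ)
    (hm : ∀ v ∈ V, m ≤ J v) :
    ∃ l : X →L[ℝ] ℝ, (∀ v ∈ V, l v = 0) ∧ ∀ G, m + l G ≤ J G := by
  have hconv : Convex ℝ {p : X × ℝ | J p.1 < p.2} := by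
    have := hJ.convex_strict_epigraph
    simpa using this
  have hopen : IsOpen {p : X × ℝ | J p.1 < p.2} :=
    isOpen_lt (hc.comp continuous_fst) continuous_snd
  have hconv2 : Convex ℝ ((V : Set X) ×ˢ ({m} : Set ℝ)) := V.convex.prod (convex_singleton m)
  have hdisj : Disjoint {p : X × ℝ | J p.1 < p.2} ((V : Set X) ×ˢ ({m} : Set ℝ)) := by
    rw [Set.disjoint_left]
    rintro ⟨x, t⟩ h1 ⟨h2, h3⟩
    simp only [Set.mem_ofPred_eq, Set.mem_singleton_iff] at h1 h3
    have := hm x h2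
    linarith
  obtain ⟨f, u, hf1, hf2⟩ := geometric_hahn_banach_open hconv hopen hconv2 hdisj
  set c : ℝ := f (0, 1) with hcdef
  let g : X →L[ℝ] ℝ := f.comp (ContinuousLinearMap.inl ℝ X ℝ)
  have hfdec : ∀ x t, f (x, t) = g x + c * t := by
    intro x t
    have : ((x, t) : X × ℝ) = (x, 0) + t • (0, 1) := by simp
    rw [this, map_add, map_smul]
    simp [g, hcdef, mul_comm]
  have hV : ∀ v ∈ V, u ≤ g v + c * m := by
    intro v hv
    rw [← hfdec]
    exact hf2 _ ⟨hv, rfl⟩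
  have h0 : u ≤ c * m := by simpa using hV 0 V.zero_mem
  have hc0 : c < 0 := by
    have h1 := hf1 (0, J 0 + 1) (by simp)
    rw [hfdec] at h1
    have h2 := hm 0 V.zero_mem
    simp only [map_zero, zero_add] at h1
    nlinarith
  have hcne : c ≠ 0 := hc0.ne
  clear_value c
  have hVz : ∀ v ∈ V, g v = 0 := by
    intro v hv
    by_contra hne
    have h1 := hV (((u - c * m - 1) / g v) • v) (V.smul_mem _ hv)
    rw [map_smul, smul_eq_mul, div_mul_cancel₀ _ hne] at h1
    linarith
  refine ⟨-(c⁻¹ • g), fun v hv => by simp [hVz v hv], fun G => ?_⟩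
  have key : g G + c * J G ≤ c * m := by
    refine le_of_forall_pos_le_add fun e he => ?_
    have h1 := hf1 (G, J G + e / (-c)) (by
      have : 0 < e / (-c) := div_pos he (by linarith)
      simpa using this)
    rw [hfdec] at h1
    have : c * (J G + e / (-c)) = c * J G - e := by
      rw [div_neg]
      field_simp
      ring
    linarith
  have : c * (m + (-(c⁻¹ • g)) G) ≥ c * J G := by
    have : c * (m + (-(c⁻¹ • g)) G) = c * m - g G := by
      simp only [neg_apply, smul_apply, smul_eq_mul]
      field_simp
      ring
    linarith
  nlinarith

theorem l1_dual {α : Type*} [MeasurableSpace α] (μ : Measure α) [IsFiniteMeasure μ]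
    (l : Lp ℝ 1 μ →L[ℝ] ℝ) :
    ∃ χ : α → ℝ, Measurable χ ∧ (∀ x, |χ x| ≤ ‖l‖) ∧ ∀ f : Lp ℝ 1 μ, l f = ∫ x, χ x * f x ∂μ := by
  let ι : Lp ℝ 2 μ →ₗ[ℝ] Lp ℝ 1 μ :=
    { toFun := fun f => ((Lp.memLp f).mono_exponent (p := 1) one_le_two).toLp
      map_add' := by
        intro f g
        rw [← MemLp.toLp_add]
        exact (MemLp.toLp_eq_toLp_iff _ _).2 (Lp.coeFn_add f g)
      map_smul' := by
        intro c f
        simp only [RingHom.id_apply]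
        rw [← MemLp.toLp_const_smul]
        exact (MemLp.toLp_eq_toLp_iff _ _).2 (Lp.coeFn_smul c f) }
  have hι : ∀ f : Lp ℝ 2 μ, ‖ι f‖ ≤ (μ Set.univ ^ (1/2 : ℝ)).toReal * ‖f‖ := by
    intro f
    show ‖((Lp.memLp f).mono_exponent (p := 1) one_le_two).toLp‖ ≤ _
    rw [Lp.norm_toLp, Lp.norm_def, mul_comm, ← ENNReal.toReal_mul]
    refine ENNReal.toReal_mono (ENNReal.mul_ne_top (Lp.eLpNorm_ne_top f) ?_) ?_
    · exact (ENNReal.rpow_lt_top_of_nonneg (by norm_num) (measure_ne_top _ _)).ne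
    · convert eLpNorm_le_eLpNorm_mul_rpow_measure_univ (p := 1) (q := 2) one_le_two (Lp.aestronglyMeasurable f) using 3
      norm_num
  let ιL : Lp ℝ 2 μ →L[ℝ] Lp ℝ 1 μ := ι.mkContinuous _ hι
  obtain ⟨h, hh⟩ : ∃ h : Lp ℝ 2 μ, ∀ f : Lp ℝ 2 μ, l (ιL f) = ∫ x, h x * f x ∂μ := by
    refine ⟨(InnerProductSpace.toDual ℝ _).symm (l.comp ιL), fun f => ?_⟩
    have := InnerProductSpace.toDual_symm_apply (𝕜 := ℝ) (x := f) (y := l.comp ιL)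
    rw [L2.inner_def] at this
    simp only [ContinuousLinearMap.comp_apply] at this
    rw [← this]
    congr 1
    ext x
    simp [mul_comm]
  have hind : ∀ s (hs : MeasurableSet s), l (indicatorConstLp 1 hs (measure_ne_top μ s) 1)
      = ∫ x in s, h x ∂μ := by
    intro s hs
    have h1 : ιL (indicatorConstLp 2 hs (measure_ne_top μ s) 1)
        = indicatorConstLp 1 hs (measure_ne_top μ s) (1 : ℝ) := by
      show ι _ = _
      simp only [ι, LinearMap.coe_mk, AddHom.coe_mk]
      conv_rhs => rw [indicatorConstLp]
      exact (MemLp.toLp_eq_toLp_iff _ _).2 (MemLp.coeFn_toLp _)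
    rw [← h1, hh, ← integral_indicator hs]
    refine integral_congr_ae ?_
    filter_upwards [indicatorConstLp_coeFn (p := 2) (hs := hs) (hμs := measure_ne_top μ s) (c := (1:ℝ))] with x hx
    rw [hx]
    by_cases hxs : x ∈ s <;> simp [hxs]
  have hhint : Integrable h μ := (Lp.memLp h).integrable one_le_two
  have hbd : ∀ s, MeasurableSet s → |∫ x in s, h x ∂μ| ≤ ‖l‖ * μ.real s := by
    intro s hs
    rw [← hind s hs, ← Real.norm_eq_abs]
    refine (l.le_opNorm _).trans ?_
    rw [norm_indicatorConstLp one_ne_zero ENNReal.one_ne_top]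
    simp
  have hup : h ≤ᵐ[μ] fun _ => ‖l‖ := by
    refine ae_le_of_forall_setIntegral_le hhint (integrable_const _) fun s hs _ => ?_
    have := hbd s hs
    simp only [setIntegral_const, smul_eq_mul]
    rw [mul_comm]; exact (abs_le.1 this).2
  have hlo : (fun _ => -‖l‖) ≤ᵐ[μ] h := by
    refine ae_le_of_forall_setIntegral_le (integrable_const _) hhint fun s hs _ => ?_
    have := hbd s hs
    simp only [setIntegral_const, smul_eq_mul]
    have := (abs_le.1 this).1
    linarith
  let χ : α → ℝ := fun x => max (-‖l‖) (min ‖l‖ (h x))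
  have hχm : Measurable χ := by
    have := (Lp.stronglyMeasurable h).measurable
    fun_prop
  have hχh : χ =ᵐ[μ] h := by
    filter_upwards [hup, hlo] with x h1 h2
    simp only [χ]
    rw [min_eq_right h1, max_eq_right h2]
  have hχb : ∀ x, |χ x| ≤ ‖l‖ := by
    intro x
    have := norm_nonneg l
    exact abs_le.2 ⟨le_max_left _ _, max_le (by linarith) (min_le_left _ _)⟩
  have hint : ∀ f : Lp ℝ 1 μ, Integrable (fun x => χ x * f x) μ := by
    intro f
    exact (L1.integrable_coeFn f).bdd_mul hχm.aestronglyMeasurable (.of_forall hχb)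
  let l' : Lp ℝ 1 μ →ₗ[ℝ] ℝ :=
    { toFun := fun f => ∫ x, χ x * f x ∂μ
      map_add' := by
        intro f g
        rw [← integral_add (hint f) (hint g)]
        refine integral_congr_ae ?_
        filter_upwards [Lp.coeFn_add f g] with x hx
        rw [hx]; simp [mul_add]
      map_smul' := by
        intro c f
        simp only [RingHom.id_apply, smul_eq_mul]
        rw [← integral_const_mul]
        refine integral_congr_ae ?_
        filter_upwards [Lp.coeFn_smul c f] with x hx
        rw [hx]; simp; ring }
  have hl'b : ∀ f, ‖l' f‖ ≤ ‖l‖ * ‖f‖ := by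
    intro f
    refine (norm_integral_le_integral_norm _).trans ?_
    rw [L1.norm_eq_integral_norm, ← integral_const_mul]
    refine integral_mono (hint f).norm ((L1.integrable_coeFn f).norm.const_mul _) fun x => ?_
    simp only [norm_mul]
    exact mul_le_mul_of_nonneg_right (hχb x) (norm_nonneg _)
  let L' : Lp ℝ 1 μ →L[ℝ] ℝ := l'.mkContinuous _ hl'b
  refine ⟨χ, hχm, hχb, fun f => ?_⟩
  show l f = L' f
  induction f using Lp.induction (p := 1) ENNReal.one_ne_top with
  | indicatorConst c hs hμs =>
    have e : ((Lp.simpleFunc.indicatorConst 1 hs hμs.ne c : Lp.simpleFunc ℝ 1 μ) : Lp ℝ 1 μ)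
        = c • indicatorConstLp 1 hs hμs.ne (1 : ℝ) := by
      rw [Lp.simpleFunc.coe_indicatorConst]
      rw [indicatorConstLp, indicatorConstLp, ← MemLp.toLp_const_smul]
      refine (MemLp.toLp_eq_toLp_iff _ _).2 (.of_forall fun x => ?_)
      simp only [Pi.smul_apply, Set.indicator]
      split_ifs <;> simp
    rw [e, map_smul, map_smul, hind _ hs]
    congr 1
    show _ = ∫ x, χ x * (indicatorConstLp 1 hs hμs.ne (1:ℝ) : Lp ℝ 1 μ) x ∂μ
    rw [← integral_indicator hs]
    refine integral_congr_ae ?_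
    rename_i s
    filter_upwards [indicatorConstLp_coeFn (p := 1) (hs := hs) (hμs := hμs.ne) (c := (1:ℝ)), hχh] with x hx hx2
    rw [hx, hx2]
    by_cases hxs : x ∈ s <;> simp [hxs]
  | add hf hg _ h1 h2 => rw [map_add, map_add, h1, h2]
  | isClosed => exact isClosed_eq l.continuous L'.continuous
theorem mdot_self_nonneg {N n : ℕ} (A : Fin N → Fin n → ℝ) : 0 ≤ mdot A A :=
  Finset.sum_nonneg fun _ _ => Finset.sum_nonneg fun _ _ => mul_self_nonneg _

theorem mnorm_nonneg' {N n : ℕ} (A : Fin N → Fin n → ℝ) : 0 ≤ mnorm A := Real.sqrt_nonneg _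

theorem mdot_le {N n : ℕ} (A B : Fin N → Fin n → ℝ) : |mdot A B| ≤ mnorm A * mnorm B := by
  rw [mnorm, mnorm, ← Real.sqrt_mul (mdot_self_nonneg A)]
  refine Real.abs_le_sqrt ?_
  simp only [mdot, ← Fintype.sum_prod_type']
  have := Finset.sum_mul_sq_le_sq_mul_sq Finset.univ (fun x : Fin N × Fin n => A x.1 x.2)
    (fun x => B x.1 x.2)
  simpa [pow_two] using this

theorem norm_le_mnorm {N n : ℕ} (A : Fin N → Fin n → ℝ) : ‖A‖ ≤ mnorm A := by
  refine (pi_norm_le_iff_of_nonneg (mnorm_nonneg' A)).2 fun a =>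
    (pi_norm_le_iff_of_nonneg (mnorm_nonneg' A)).2 fun i => ?_
  rw [Real.norm_eq_abs]
  refine Real.abs_le_sqrt ?_
  rw [pow_two, mdot]
  refine le_trans ?_ (Finset.single_le_sum (f := fun a => ∑ i, A a i * A a i)
    (fun _ _ => Finset.sum_nonneg fun _ _ => mul_self_nonneg _) (Finset.mem_univ a))
  exact Finset.single_le_sum (f := fun i => A a i * A a i) (fun _ _ => mul_self_nonneg _)
    (Finset.mem_univ i)

theorem mdot_le_norm {N n : ℕ} (A B : Fin N → Fin n → ℝ) :
    |mdot A B| ≤ (N * n : ℝ) * ‖A‖ * ‖B‖ := by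
  refine (Finset.abs_sum_le_sum_abs _ _).trans ?_
  have : ∀ a ∈ Finset.univ, |∑ i, A a i * B a i| ≤ n * ‖A‖ * ‖B‖ := by
    intro a _
    refine (Finset.abs_sum_le_sum_abs _ _).trans ?_
    have : ∀ i ∈ Finset.univ, |A a i * B a i| ≤ ‖A‖ * ‖B‖ := by
      intro i _
      rw [abs_mul]
      exact mul_le_mul ((norm_le_pi_norm (A a) i).trans (norm_le_pi_norm A a))
        ((norm_le_pi_norm (B a) i).trans (norm_le_pi_norm B a)) (abs_nonneg _) (norm_nonneg _)
    refine (Finset.sum_le_sum this).trans ?_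
    simp [mul_assoc]
  refine (Finset.sum_le_sum this).trans ?_
  simp [mul_assoc]

theorem mnorm_le_norm {N n : ℕ} (A : Fin N → Fin n → ℝ) : mnorm A ≤ (N * n + 1 : ℝ) * ‖A‖ := by
  refine Real.sqrt_le_iff.2 ⟨by positivity, ?_⟩
  have h1 := (abs_le.1 (mdot_le_norm A A)).2
  have : (0:ℝ) ≤ N * n := by positivity
  nlinarith [mul_nonneg (norm_nonneg A) (norm_nonneg A), mul_nonneg this (mul_nonneg (norm_nonneg A) (norm_nonneg A)), mul_nonneg (mul_nonneg this this) (mul_nonneg (norm_nonneg A) (norm_nonneg A))]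

theorem mdot_add_right {N n : ℕ} (A B C : Fin N → Fin n → ℝ) :
    mdot A (B + C) = mdot A B + mdot A C := by
  simp [mdot, mul_add, Finset.sum_add_distrib]

theorem mdot_add_left {N n : ℕ} (A B C : Fin N → Fin n → ℝ) :
    mdot (A + B) C = mdot A C + mdot B C := by
  simp [mdot, add_mul, Finset.sum_add_distrib]

theorem mdot_smul_right {N n : ℕ} (c : ℝ) (A B : Fin N → Fin n → ℝ) :
    mdot A (c • B) = c * mdot A B := by
  simp only [mdot, Finset.mul_sum, Pi.smul_apply, smul_eq_mul]
  refine Finset.sum_congr rfl fun _ _ => Finset.sum_congr rfl fun _ _ => by ring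

theorem mnorm_smul {N n : ℕ} (c : ℝ) (B : Fin N → Fin n → ℝ) :
    mnorm (c • B) = |c| * mnorm B := by
  have : mdot (c • B) (c • B) = c ^ 2 * mdot B B := by
    simp only [mdot, Finset.mul_sum, Pi.smul_apply, smul_eq_mul]
    refine Finset.sum_congr rfl fun _ _ => Finset.sum_congr rfl fun _ _ => by ring
  rw [mnorm, mnorm, this, Real.sqrt_mul (sq_nonneg c), Real.sqrt_sq_eq_abs]

theorem continuous_mdot {N n : ℕ} :
    Continuous fun p : (Fin N → Fin n → ℝ) × (Fin N → Fin n → ℝ) => mdot p.1 p.2 := by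
  unfold mdot
  fun_prop

theorem continuous_mnorm {N n : ℕ} :
    Continuous fun p : (Fin N → Fin n → ℝ) => mnorm p := by
  unfold mnorm
  exact (continuous_mdot.comp (continuous_id.prodMk continuous_id)).sqrt

theorem aesm_mdot {α : Type*} [MeasurableSpace α] {μ : Measure α} {N n : ℕ}
    {A G : α → Fin N → Fin n → ℝ} (hA : AEStronglyMeasurable A μ)
    (hG : AEStronglyMeasurable G μ) :
    AEStronglyMeasurable (fun x => mdot (A x) (G x)) μ := by
  have hA' : ∀ a i, AEMeasurable (fun x => A x a i) μ := fun a i =>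
    (aemeasurable_pi_iff.1 (aemeasurable_pi_iff.1 hA.aemeasurable a) i)
  have hG' : ∀ a i, AEMeasurable (fun x => G x a i) μ := fun a i =>
    (aemeasurable_pi_iff.1 (aemeasurable_pi_iff.1 hG.aemeasurable a) i)
  refine AEMeasurable.aestronglyMeasurable ?_
  unfold mdot
  exact Finset.aemeasurable_fun_sum _ fun a _ => Finset.aemeasurable_fun_sum _ fun i _ =>
    (hA' a i).mul (hG' a i)

theorem integrable_mdot {α : Type*} [MeasurableSpace α] {μ : Measure α} {N n : ℕ}
    {A G : α → Fin N → Fin n → ℝ} (hA : AEStronglyMeasurable A μ)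
    (hAb : ∃ C : ℝ, ∀ᵐ x ∂μ, mnorm (A x) ≤ C) (hG : Integrable G μ) :
    Integrable (fun x => mdot (A x) (G x)) μ := by
  obtain ⟨C, hC⟩ := hAb
  have hn : Integrable (fun x => ((N * n : ℝ) * |C|) * ‖G x‖) μ := hG.norm.const_mul _
  refine hn.mono' (aesm_mdot hA hG.1) ?_
  filter_upwards [hC] with x hx
  refine (mdot_le_norm _ _).trans ?_
  have h1 : ‖A x‖ ≤ |C| := (norm_le_mnorm (A x)).trans (hx.trans (le_abs_self C))
  exact mul_le_mul_of_nonneg_right (mul_le_mul_of_nonneg_left h1 (by positivity)) (norm_nonneg _)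

theorem basis_decomp {N n : ℕ} (A : Fin N → Fin n → ℝ) :
    A = ∑ a, ∑ i, A a i • basisMat a i := by
  ext a i
  simp only [Finset.sum_apply, Pi.smul_apply, smul_eq_mul, basisMat]
  rw [Finset.sum_eq_single a, Finset.sum_eq_single i]
  · simp
  · intro j _ hj; simp [hj.symm]
  · simp
  · intro j _ hj; simp [hj.symm]
  · simp

set_option maxHeartbeats 1000000 in
theorem l1_dual_vec {α : Type*} [MeasurableSpace α] (μ : Measure α) [IsFiniteMeasure μ] {N n : ℕ}
    (l : Lp (Fin N → Fin n → ℝ) 1 μ →L[ℝ] ℝ) :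
    ∃ χ : α → Fin N → Fin n → ℝ, Measurable χ ∧ (∃ C : ℝ, ∀ x, mnorm (χ x) ≤ C) ∧
      ∀ f : Lp (Fin N → Fin n → ℝ) 1 μ, l f = ∫ x, mdot (χ x) (f x) ∂μ := by
  let B : Fin N → Fin n → (ℝ →L[ℝ] (Fin N → Fin n → ℝ)) :=
    fun a i => ContinuousLinearMap.toSpanSingleton ℝ (basisMat a i)
  let P : Fin N → Fin n → ((Fin N → Fin n → ℝ) →L[ℝ] ℝ) :=
    fun a i => (ContinuousLinearMap.proj (R := ℝ) (φ := fun _ : Fin n => ℝ) i).comp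
      (ContinuousLinearMap.proj (R := ℝ) (φ := fun _ : Fin N => Fin n → ℝ) a)
  choose χ hm hb hr using fun a i => l1_dual μ (l.comp ((B a i).compLpL 1 μ))
  refine ⟨fun x a i => χ a i x, ?_, ?_, ?_⟩
  · exact measurable_pi_lambda _ fun a => measurable_pi_lambda _ fun i => hm a i
  · set S : ℝ := ∑ a, ∑ i, ‖l.comp ((B a i).compLpL 1 μ)‖ with hS
    have hS0 : 0 ≤ S := Finset.sum_nonneg fun _ _ => Finset.sum_nonneg fun _ _ => norm_nonneg _
    refine ⟨(N * n + 1 : ℝ) * S, fun x => (mnorm_le_norm _).trans ?_⟩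
    refine mul_le_mul_of_nonneg_left ?_ (by positivity)
    refine (pi_norm_le_iff_of_nonneg hS0).2 fun a => (pi_norm_le_iff_of_nonneg hS0).2 fun i => ?_
    refine (hb a i x).trans ?_
    refine le_trans ?_ (Finset.single_le_sum (f := fun a => ∑ i, ‖l.comp ((B a i).compLpL 1 μ)‖)
      (fun _ _ => Finset.sum_nonneg fun _ _ => norm_nonneg _) (Finset.mem_univ a))
    exact Finset.single_le_sum (f := fun i => ‖l.comp ((B a i).compLpL 1 μ)‖)
      (fun _ _ => norm_nonneg _) (Finset.mem_univ i)
  · intro f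
    have hdec : f = ∑ a, ∑ i, (B a i).compLpL 1 μ ((P a i).compLpL 1 μ f) := by
      refine Lp.ext ?_
      have h1 : ∀ a i, (((B a i).compLpL 1 μ ((P a i).compLpL 1 μ f) : Lp _ 1 μ) : α → _)
          =ᵐ[μ] fun x => f x a i • basisMat a i := by
        intro a i
        filter_upwards [(B a i).coeFn_compLpL ((P a i).compLpL 1 μ f),
          (P a i).coeFn_compLpL f] with x hx hx2
        rw [hx, hx2]
        rfl
      have h1' : ∀ᵐ x ∂μ, ∀ a i, ((B a i).compLpL 1 μ ((P a i).compLpL 1 μ f) : Lp _ 1 μ) x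
          = f x a i • basisMat a i := ae_all_iff.2 fun a => ae_all_iff.2 fun i => h1 a i
      have h2 : ∀ᵐ x ∂μ, ∀ a, ((∑ i, (B a i).compLpL 1 μ ((P a i).compLpL 1 μ f) : Lp _ 1 μ)) x
          = ∑ i, ((B a i).compLpL 1 μ ((P a i).compLpL 1 μ f) : Lp _ 1 μ) x := by
        refine ae_all_iff.2 fun a => ?_
        exact Lp.coeFn_fun_finsetSum _ _
      filter_upwards [h1', h2, Lp.coeFn_fun_finsetSum Finset.univ (fun a => ∑ i, (B a i).compLpL 1 μ ((P a i).compLpL 1 μ f))] with x e1 e2 e3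
      rw [e3]
      simp only [e2, e1]
      exact basis_decomp (f x)
    have hint : ∀ a i, Integrable (fun x => χ a i x * f x a i) μ := by
      intro a i
      have : Integrable (fun x => f x a i) μ := (P a i).integrable_comp (L1.integrable_coeFn f)
      exact this.bdd_mul (hm a i).aestronglyMeasurable (.of_forall (hb a i))
    conv_lhs => rw [hdec]
    simp only [map_sum, mdot]
    rw [integral_finsetSum _ fun a _ => integrable_finsetSum _ fun i _ => hint a i]
    refine Finset.sum_congr rfl fun a _ => ?_
    rw [integral_finsetSum _ fun i _ => hint a i]
    refine Finset.sum_congr rfl fun i _ => ?_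
    rw [← ContinuousLinearMap.comp_apply, hr a i]
    refine integral_congr_ae ?_
    filter_upwards [(P a i).coeFn_compLpL f] with x hx
    rw [hx]
    rfl
theorem F_lip {N n : ℕ} {L : ℝ} (hL : 0 ≤ L) {F : (Fin N → Fin n → ℝ) → ℝ}
    (hFpos : ∀ z, 0 ≤ F z) (hFconv : ConvexOn ℝ Set.univ F)
    (hg : ∀ z, F z ≤ L * (1 + mnorm z)) :
    ∃ K : ℝ, 0 < K ∧ ∀ z w, F w - F z ≤ K * ‖w - z‖ := by
  set K := L * (N * n + 1 : ℝ) with hK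
  have hK0 : 0 ≤ K := by positivity
  refine ⟨K + 1, by linarith, fun z w => ?_⟩
  suffices F w - F z ≤ K * ‖w - z‖ by
    have := norm_nonneg (w - z)
    linarith
  have hg' : ∀ z, F z ≤ L + K * ‖z‖ := by
    intro z
    have h1 := hg z
    have h2 := mul_le_mul_of_nonneg_left (mnorm_le_norm z) hL
    rw [hK]; linarith
  set D := L + K * ‖z‖ with hD
  have hD0 : 0 ≤ D := by positivity
  refine le_of_forall_pos_le_add fun e he => ?_
  set s := D / e + 1 with hs
  have hs1 : 1 ≤ s := by
    have : 0 ≤ D / e := by positivity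
    linarith
  have hs0 : 0 < s := by linarith
  have hFc := hFconv.2
  have hc := @hFc z (Set.mem_univ z) (z + s • (w - z)) (Set.mem_univ _)
    (1 - s⁻¹) s⁻¹ (by have := inv_le_one_of_one_le₀ hs1; linarith) (by positivity) (by ring)
  have he1 : (1 - s⁻¹) • z + s⁻¹ • (z + s • (w - z)) = w := by
    rw [smul_add, smul_smul, inv_mul_cancel₀ hs0.ne', sub_smul]
    module
  rw [he1] at hc
  simp only [smul_eq_mul] at hc
  have h3 : F (z + s • (w - z)) ≤ D + s * (K * ‖w - z‖) := by
    refine (hg' _).trans ?_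
    have : ‖z + s • (w - z)‖ ≤ ‖z‖ + s * ‖w - z‖ := by
      refine (norm_add_le _ _).trans ?_
      rw [norm_smul, Real.norm_of_nonneg hs0.le]
    have := mul_le_mul_of_nonneg_left this hK0
    rw [hD]; linarith
  have h4 : s⁻¹ * F (z + s • (w - z)) ≤ s⁻¹ * D + K * ‖w - z‖ := by
    have := mul_le_mul_of_nonneg_left h3 (inv_nonneg.2 hs0.le)
    rwa [mul_add, ← mul_assoc s⁻¹ s, inv_mul_cancel₀ hs0.ne', one_mul] at this
  have h5 : s⁻¹ * D ≤ e := by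
    rw [inv_mul_le_iff₀ hs0, hs, add_mul, div_mul_cancel₀ _ he.ne']
    linarith
  have h6 : 0 ≤ s⁻¹ * F z := mul_nonneg (by positivity) (hFpos z)
  linarith

theorem F_coerc {α : Type*} {N n : ℕ} {F Finf : (Fin N → Fin n → ℝ) → ℝ}
    (hFpos : ∀ z, 0 ≤ F z) {K : ℝ} (hK : 0 < K) (hlip : ∀ z w, F w - F z ≤ K * ‖w - z‖)
    (hFinf : ∀ z, Filter.Tendsto (fun t : ℝ => t * F (t⁻¹ • z))
      (nhdsWithin 0 (Set.Ioi 0)) (nhds (Finf z))) {T₀ : α → Fin N → Fin n → ℝ} {M : ℝ} {δ : ℝ}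
    (hδ : 0 < δ) :
    ∃ c C : ℝ, 0 < c ∧ ∀ x, mnorm (T₀ x) ≤ M →
      (∀ ξ : Fin N → Fin n → ℝ, mnorm ξ = 1 → δ ≤ Finf ξ - mdot (T₀ x) ξ) →
      ∀ z, c * ‖z‖ - C ≤ F z - mdot (T₀ x) z := by
  have hlip2 : ∀ t : ℝ, 0 < t → ∀ ξ η, t * F (t⁻¹ • ξ) ≤ t * F (t⁻¹ • η) + K * ‖ξ - η‖ := by
    intro t ht ξ η
    have h := hlip (t⁻¹ • η) (t⁻¹ • ξ)
    rw [← smul_sub, norm_smul, Real.norm_of_nonneg (inv_nonneg.2 ht.le)] at h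
    have := mul_le_mul_of_nonneg_left h ht.le
    have e : t * (K * (t⁻¹ * ‖ξ - η‖)) = K * ‖ξ - η‖ := by field_simp
    rw [e] at this
    linarith
  have hlip3 : ∀ ξ η, Finf ξ ≤ Finf η + K * ‖ξ - η‖ := by
    intro ξ η
    refine le_of_tendsto_of_tendsto (hFinf ξ) ((hFinf η).add_const _) ?_
    filter_upwards [self_mem_nhdsWithin] with t ht
    exact hlip2 t ht ξ η
  have hcomp : IsCompact {ξ : Fin N → Fin n → ℝ | mnorm ξ = 1} := by
    refine Metric.isCompact_of_isClosed_isBounded (isClosed_eq continuous_mnorm continuous_const) ?_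
    refine (Metric.isBounded_closedBall (x := (0 : Fin N → Fin n → ℝ)) (r := 1)).subset ?_
    intro ξ hξ
    have : mnorm ξ = 1 := hξ
    rw [mem_closedBall_zero_iff, ← this]
    exact norm_le_mnorm ξ
  obtain ⟨r, hr0, hr⟩ : ∃ r > 0, ∀ ξ ∈ {ξ : Fin N → Fin n → ℝ | mnorm ξ = 1}, ∀ t : ℝ, 0 < t → t < r →
      Finf ξ - δ / 2 ≤ t * F (t⁻¹ • ξ) := by
    refine hcomp.induction_on
      (p := fun s => ∃ r > 0, ∀ ξ ∈ s, ∀ t : ℝ, 0 < t → t < r → Finf ξ - δ / 2 ≤ t * F (t⁻¹ • ξ))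
      ?_ ?_ ?_ ?_
    · exact ⟨1, one_pos, by simp⟩
    · rintro s t hst ⟨r, h0, h⟩
      exact ⟨r, h0, fun ξ hξ => h ξ (hst hξ)⟩
    · rintro s t ⟨r, h0, h⟩ ⟨r', h0', h'⟩
      refine ⟨min r r', lt_min h0 h0', ?_⟩
      rintro ξ (hξ | hξ) u hu hu2
      · exact h ξ hξ u hu (hu2.trans_le (min_le_left _ _))
      · exact h' ξ hξ u hu (hu2.trans_le (min_le_right _ _))
    · intro ξ _
      have h1 : ∀ᶠ t in nhdsWithin (0:ℝ) (Set.Ioi 0), Finf ξ - δ / 4 < t * F (t⁻¹ • ξ) :=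
        (hFinf ξ).eventually (lt_mem_nhds (by linarith))
      obtain ⟨r, hr, h2⟩ := (mem_nhdsGT_iff_exists_Ioo_subset).1 h1
      refine ⟨Metric.ball ξ (δ / (8 * K)),
        mem_nhdsWithin_of_mem_nhds (Metric.ball_mem_nhds _ (by positivity)), r, hr, ?_⟩
      intro η hη t ht0 htr
      have h3 : Finf ξ - δ / 4 < t * F (t⁻¹ • ξ) := h2 ⟨ht0, htr⟩
      rw [mem_ball_iff_norm] at hη
      have h4 : K * ‖η - ξ‖ ≤ δ / 8 := by
        have := mul_le_mul_of_nonneg_left hη.le hK.le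
        have e : K * (δ / (8 * K)) = δ / 8 := by field_simp
        linarith
      have h5 := hlip3 η ξ
      have h6 := hlip2 t ht0 ξ η
      rw [norm_sub_rev] at h6
      linarith
  refine ⟨δ / 2, (|M| + δ / 2) / r, by positivity, fun x hxM hx z => ?_⟩
  suffices δ / 2 * mnorm z - (|M| + δ / 2) / r ≤ F z - mdot (T₀ x) z by
    have := mul_le_mul_of_nonneg_left (norm_le_mnorm z) (by positivity : 0 ≤ δ / 2)
    linarith
  set ρ := mnorm z with hρ
  have hρ0 : 0 ≤ ρ := mnorm_nonneg' z
  rcases le_or_gt ρ (1 / r) with h | h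
  · have h1 := (abs_le.1 (mdot_le (T₀ x) z)).2
    have h2 : mnorm (T₀ x) * mnorm z ≤ |M| * ρ :=
      mul_le_mul_of_nonneg_right (hxM.trans (le_abs_self M)) hρ0
    have h3 : (|M| + δ / 2) * ρ ≤ (|M| + δ / 2) / r := by
      have := mul_le_mul_of_nonneg_left h (by positivity : 0 ≤ |M| + δ / 2)
      rwa [mul_one_div] at this
    have := hFpos z
    linarith
  · have hρp : 0 < ρ := lt_trans (by positivity) h
    have h1 : mnorm (ρ⁻¹ • z) = 1 := by
      rw [mnorm_smul, abs_of_pos (inv_pos.2 hρp), ← hρ, inv_mul_cancel₀ hρp.ne']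
    have h2 := hr _ h1 ρ⁻¹ (inv_pos.2 hρp) (by
      rw [inv_lt_comm₀ hρp hr0, ← one_div]; exact h)
    rw [inv_inv, smul_smul, mul_inv_cancel₀ hρp.ne', one_smul] at h2
    have h3 := hx _ h1
    rw [mdot_smul_right] at h3
    have h4 : δ / 2 ≤ ρ⁻¹ * (F z - mdot (T₀ x) z) := by linarith
    have h5 : ρ * (δ / 2) ≤ F z - mdot (T₀ x) z := by
      have := mul_le_mul_of_nonneg_left h4 hρ0
      rwa [← mul_assoc, mul_inv_cancel₀ hρp.ne', one_mul] at this
    have : 0 ≤ (|M| + δ / 2) / r := by positivity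
    linarith
theorem integrable_F {α : Type*} [MeasurableSpace α] {μ : Measure α} [IsFiniteMeasure μ] {N n : ℕ}
    {F : (Fin N → Fin n → ℝ) → ℝ} (hFc : Continuous F) (hFpos : ∀ z, 0 ≤ F z) {K : ℝ}
    (hlip : ∀ z w, F w - F z ≤ K * ‖w - z‖) {G : α → Fin N → Fin n → ℝ} (hG : Integrable G μ) :
    Integrable (fun x => F (G x)) μ := by
  have hn : Integrable (fun x => F 0 + K * ‖G x‖) μ := (integrable_const _).add (hG.norm.const_mul _)
  have hm : AEMeasurable (fun x => F (G x)) μ := hFc.measurable.comp_aemeasurable hG.1.aemeasurable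
  refine hn.mono' hm.aestronglyMeasurable (.of_forall fun x => ?_)
  rw [Real.norm_of_nonneg (hFpos _)]
  have := hlip 0 (G x)
  rw [sub_zero] at this
  linarith

theorem Fstar_dense {N n : ℕ} {F : (Fin N → Fin n → ℝ) → ℝ} (hFc : Continuous F)
    (z : Fin N → Fin n → ℝ) :
    FstarShift F z = ⨆ k : ℕ, ENNReal.ofReal (mdot z (TopologicalSpace.denseSeq (Fin N → Fin n → ℝ) k)
      - F (TopologicalSpace.denseSeq _ k) + F 0) := by
  refine le_antisymm (iSup_le fun w => ?_) (iSup_le fun k => ?_)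
  · have hcont : Continuous fun w : Fin N → Fin n → ℝ => ENNReal.ofReal (mdot z w - F w + F 0) := by
      have h1 : Continuous fun w : Fin N → Fin n → ℝ => mdot z w := by unfold mdot; fun_prop
      exact ENNReal.continuous_ofReal.comp ((h1.sub hFc).add continuous_const)
    set S := ⨆ k : ℕ, ENNReal.ofReal (mdot z (TopologicalSpace.denseSeq (Fin N → Fin n → ℝ) k)
      - F (TopologicalSpace.denseSeq _ k) + F 0)
    have hcl : IsClosed {w : Fin N → Fin n → ℝ | ENNReal.ofReal (mdot z w - F w + F 0) ≤ S} :=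
      isClosed_le hcont continuous_const
    refine (TopologicalSpace.denseRange_denseSeq (Fin N → Fin n → ℝ)).induction_on
      (p := fun w => ENNReal.ofReal (mdot z w - F w + F 0) ≤ S) w hcl fun k => ?_
    exact le_iSup (fun k : ℕ => ENNReal.ofReal (mdot z (TopologicalSpace.denseSeq (Fin N → Fin n → ℝ) k)
      - F (TopologicalSpace.denseSeq _ k) + F 0)) k
  · exact le_iSup (fun w => ENNReal.ofReal (mdot z w - F w + F 0)) _

theorem measurable_mdot_left {N n : ℕ} (w : Fin N → Fin n → ℝ) :
    Measurable fun z : Fin N → Fin n → ℝ => mdot z w := by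
  have : Continuous fun z : Fin N → Fin n → ℝ => mdot z w := by unfold mdot; fun_prop
  exact this.measurable

theorem measurable_Fstar {N n : ℕ} {F : (Fin N → Fin n → ℝ) → ℝ} (hFc : Continuous F) :
    Measurable (FstarShift F) := by
  have : FstarShift F = fun z => ⨆ k : ℕ, ENNReal.ofReal (mdot z (TopologicalSpace.denseSeq (Fin N → Fin n → ℝ) k)
      - F (TopologicalSpace.denseSeq _ k) + F 0) := funext fun z => Fstar_dense hFc z
  rw [this]
  exact Measurable.iSup fun k =>
    (((measurable_mdot_left _).sub_const _).add_const _).ennreal_ofReal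

/-- greedy selection -/
noncomputable def selG {α : Type*} {N n : ℕ} (F : (Fin N → Fin n → ℝ) → ℝ)
    (z : α → Fin N → Fin n → ℝ) : ℕ → α → Fin N → Fin n → ℝ
  | 0 => fun _ => 0
  | k + 1 => fun x =>
    open Classical in
    if mdot (z x) (selG F z k x) - F (selG F z k x)
      < mdot (z x) (TopologicalSpace.denseSeq (Fin N → Fin n → ℝ) k)
        - F (TopologicalSpace.denseSeq _ k) then TopologicalSpace.denseSeq _ k else selG F z k x

theorem measurable_mdot' {α : Type*} [MeasurableSpace α] {N n : ℕ}
    {A G : α → Fin N → Fin n → ℝ} (hA : Measurable A) (hG : Measurable G) :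
    Measurable (fun x => mdot (A x) (G x)) := by
  have hA' : ∀ a i, Measurable (fun x => A x a i) := fun a i =>
    (measurable_pi_iff.1 (measurable_pi_iff.1 hA a) i)
  have hG' : ∀ a i, Measurable (fun x => G x a i) := fun a i =>
    (measurable_pi_iff.1 (measurable_pi_iff.1 hG a) i)
  unfold mdot
  exact Finset.measurable_fun_sum _ fun a _ => Finset.measurable_fun_sum _ fun i _ =>
    (hA' a i).mul (hG' a i)

theorem selG_meas {α : Type*} [MeasurableSpace α] {N n : ℕ} {F : (Fin N → Fin n → ℝ) → ℝ}
    (hFc : Continuous F) {z : α → Fin N → Fin n → ℝ} (hz : Measurable z) (k : ℕ) :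
    Measurable (selG F z k) ∧ ∃ C : ℝ, ∀ x, ‖selG F z k x‖ ≤ C := by
  induction k with
  | zero => exact ⟨measurable_const, 0, fun x => by simp [selG]⟩
  | succ k ih =>
    obtain ⟨h1, C, hC⟩ := ih
    refine ⟨?_, max C ‖TopologicalSpace.denseSeq (Fin N → Fin n → ℝ) k‖, fun x => ?_⟩
    · rw [selG]
      refine Measurable.ite ?_ measurable_const h1
      refine measurableSet_lt ((measurable_mdot' hz h1).sub (hFc.measurable.comp h1)) ?_
      exact ((measurable_mdot_left _).comp hz).sub_const _
    · rw [selG]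
      beta_reduce
      split_ifs
      · exact le_max_right _ _
      · exact (hC x).trans (le_max_left _ _)

theorem selG_step {α : Type*} {N n : ℕ} (F : (Fin N → Fin n → ℝ) → ℝ)
    (z : α → Fin N → Fin n → ℝ) (k : ℕ) (x : α) :
    mdot (z x) (selG F z k x) - F (selG F z k x) ≤
      mdot (z x) (selG F z (k+1) x) - F (selG F z (k+1) x) ∧
    mdot (z x) (TopologicalSpace.denseSeq (Fin N → Fin n → ℝ) k)
        - F (TopologicalSpace.denseSeq _ k) ≤
      mdot (z x) (selG F z (k+1) x) - F (selG F z (k+1) x) := by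
  rw [selG]
  beta_reduce
  split_ifs with h
  · exact ⟨h.le, le_rfl⟩
  · exact ⟨le_rfl, not_lt.1 h⟩

theorem selG_nonneg {α : Type*} {N n : ℕ} (F : (Fin N → Fin n → ℝ) → ℝ)
    (z : α → Fin N → Fin n → ℝ) (k : ℕ) (x : α) :
    0 ≤ mdot (z x) (selG F z k x) - F (selG F z k x) + F 0 := by
  induction k with
  | zero => simp [selG, mdot]
  | succ k ih => linarith [(selG_step F z k x).1]

theorem lintegral_Fstar_le {α : Type*} [MeasurableSpace α] {μ : Measure α} [IsFiniteMeasure μ]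
    {N n : ℕ} {F : (Fin N → Fin n → ℝ) → ℝ} (hFc : Continuous F)
    (hFpos : ∀ z, 0 ≤ F z) {K : ℝ} (hlip : ∀ z w, F w - F z ≤ K * ‖w - z‖)
    {z : α → Fin N → Fin n → ℝ} (hz : AEStronglyMeasurable z μ)
    (hzb : ∃ C : ℝ, ∀ᵐ x ∂μ, mnorm (z x) ≤ C) (R : ℝ)
    (hR : ∀ G : α → Fin N → Fin n → ℝ, Integrable G μ →
      ∫ x, (mdot (z x) (G x) - F (G x) + F 0) ∂μ ≤ R) :
    ∫⁻ x, FstarShift F (z x) ∂μ ≤ ENNReal.ofReal R := by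
  set y := hz.mk z with hy
  have hym : Measurable y := hz.stronglyMeasurable_mk.measurable
  have hyz : z =ᵐ[μ] y := hz.ae_eq_mk
  have hGi : ∀ k, Integrable (selG F y k) μ := by
    intro k
    obtain ⟨h1, C, hC⟩ := selG_meas hFc hym k
    exact Integrable.of_bound h1.aestronglyMeasurable C (.of_forall hC)
  have hstep : ∀ k x, mdot (y x) (selG F y k x) - F (selG F y k x) + F 0 ≤
      mdot (y x) (selG F y (k+1) x) - F (selG F y (k+1) x) + F 0 := fun k x => by
    linarith [(selG_step F y k x).1]
  have e1 : ∫⁻ x, FstarShift F (z x) ∂μ = ∫⁻ x, ⨆ k, ENNReal.ofReal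
      (mdot (y x) (selG F y k x) - F (selG F y k x) + F 0) ∂μ := by
    refine lintegral_congr_ae ?_
    filter_upwards [hyz] with x hx
    rw [hx]
    refine le_antisymm ?_ (iSup_le fun k => ?_)
    · rw [Fstar_dense hFc]
      refine iSup_le fun k => ?_
      refine le_trans ?_ (le_iSup (fun k => ENNReal.ofReal
        (mdot (y x) (selG F y k x) - F (selG F y k x) + F 0)) (k+1))
      exact ENNReal.ofReal_le_ofReal (by linarith [(selG_step F y k x).2])
    · exact le_iSup (fun w => ENNReal.ofReal (mdot (y x) w - F w + F 0)) _
  have hmeas : ∀ k, Measurable fun x => ENNReal.ofReal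
      (mdot (y x) (selG F y k x) - F (selG F y k x) + F 0) := by
    intro k
    have h1 := (selG_meas hFc hym k).1
    exact (((measurable_mdot' hym h1).sub (hFc.measurable.comp h1)).add_const _).ennreal_ofReal
  rw [e1, lintegral_iSup hmeas]
  · refine iSup_le fun k => ?_
    have hyb : ∃ C : ℝ, ∀ᵐ x ∂μ, mnorm (y x) ≤ C := by
      obtain ⟨C, hC⟩ := hzb
      refine ⟨C, ?_⟩
      filter_upwards [hC, hyz] with x h1 h2
      rwa [← h2]
    have hi : Integrable (fun x => mdot (y x) (selG F y k x) - F (selG F y k x) + F 0) μ :=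
      ((integrable_mdot hym.aestronglyMeasurable hyb (hGi k)).sub
        (integrable_F hFc hFpos hlip (hGi k))).add (integrable_const _)
    rw [← ofReal_integral_eq_lintegral_ofReal hi (.of_forall fun x => selG_nonneg F y k x)]
    refine ENNReal.ofReal_le_ofReal ?_
    refine le_trans (le_of_eq ?_) (hR _ (hGi k))
    refine integral_congr_ae ?_
    filter_upwards [hyz] with x hx
    rw [hx]
  · intro i j hij x
    refine ENNReal.ofReal_le_ofReal ?_
    exact monotone_nat_of_le_succ (f := fun k => mdot (y x) (selG F y k x) - F (selG F y k x) + F 0)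
      (fun k => hstep k x) hij

theorem integrable_phi {α : Type*} [MeasurableSpace α] {μ : Measure α} [IsFiniteMeasure μ]
    {N n : ℕ} {F : (Fin N → Fin n → ℝ) → ℝ} (hFc : Continuous F)
    (hFpos : ∀ z, 0 ≤ F z) {K : ℝ} (hlip : ∀ z w, F w - F z ≤ K * ‖w - z‖)
    {z : α → Fin N → Fin n → ℝ} (hz : AEStronglyMeasurable z μ)
    (hzb : ∃ C : ℝ, ∀ᵐ x ∂μ, mnorm (z x) ≤ C) {G : α → Fin N → Fin n → ℝ} (hG : Integrable G μ) :
    Integrable (fun x => mdot (z x) (G x) - F (G x) + F 0) μ :=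
  ((integrable_mdot hz hzb hG).sub (integrable_F hFc hFpos hlip hG)).add (integrable_const _)

theorem ofReal_integral_phi_le {α : Type*} [MeasurableSpace α] {μ : Measure α}
    {N n : ℕ} {F : (Fin N → Fin n → ℝ) → ℝ}
    {z : α → Fin N → Fin n → ℝ} {G : α → Fin N → Fin n → ℝ}
    (hi : Integrable (fun x => mdot (z x) (G x) - F (G x) + F 0) μ) :
    ENNReal.ofReal (∫ x, (mdot (z x) (G x) - F (G x) + F 0) ∂μ) ≤ ∫⁻ x, FstarShift F (z x) ∂μ := by
  have h1 : ∫ x, (mdot (z x) (G x) - F (G x) + F 0) ∂μ ≤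
      ∫ x, max (mdot (z x) (G x) - F (G x) + F 0) 0 ∂μ :=
    integral_mono hi hi.pos_part fun x => le_max_left _ _
  refine (ENNReal.ofReal_le_ofReal h1).trans ?_
  rw [ofReal_integral_eq_lintegral_ofReal hi.pos_part (.of_forall fun x => le_max_right _ _)]
  refine lintegral_mono fun x => ?_
  simp only
  rw [ENNReal.ofReal_max, ENNReal.ofReal_zero, max_eq_left zero_le]
  exact le_iSup (fun w => ENNReal.ofReal (mdot (z x) w - F w + F 0)) (G x)
theorem exists_dual {α : Type*} [MeasurableSpace α] {μ : Measure α} [IsFiniteMeasure μ]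
    {N n : ℕ} {F : (Fin N → Fin n → ℝ) → ℝ} (hFc : Continuous F) (hFconv : ConvexOn ℝ Set.univ F)
    (hFpos : ∀ z, 0 ≤ F z) {K : ℝ} (hK : 0 < K) (hlip : ∀ z w, F w - F z ≤ K * ‖w - z‖)
    {T : α → Fin N → Fin n → ℝ} (hT : AEStronglyMeasurable T μ)
    (hTb : ∃ C : ℝ, ∀ᵐ x ∂μ, mnorm (T x) ≤ C)
    (V : Submodule ℝ (Lp (Fin N → Fin n → ℝ) 1 μ)) (m : ℝ)
    (hm : ∀ G ∈ V, m ≤ ∫ x, (F (G x) - mdot (T x) (G x)) ∂μ) :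
    ∃ χ : α → Fin N → Fin n → ℝ, Measurable χ ∧ (∃ C : ℝ, ∀ x, mnorm (χ x) ≤ C) ∧
      (∀ G ∈ V, ∫ x, mdot (χ x) (G x) ∂μ = 0) ∧
      ∫⁻ x, FstarShift F (T x + χ x) ∂μ ≤ ENNReal.ofReal (F 0 * μ.real Set.univ - m) := by
  set J : Lp (Fin N → Fin n → ℝ) 1 μ → ℝ := fun G => ∫ x, (F (G x) - mdot (T x) (G x)) ∂μ with hJ
  have hint : ∀ G : Lp (Fin N → Fin n → ℝ) 1 μ,
      Integrable (fun x => F (G x) - mdot (T x) (G x)) μ := fun G =>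
    (integrable_F hFc hFpos hlip (L1.integrable_coeFn G)).sub
      (integrable_mdot hT hTb (L1.integrable_coeFn G))
  have hJconv : ConvexOn ℝ Set.univ J := by
    refine ⟨convex_univ, fun G _ H _ a b ha hb hab => ?_⟩
    simp only [hJ, smul_eq_mul]
    rw [← integral_const_mul, ← integral_const_mul,
      ← integral_add ((hint G).const_mul a) ((hint H).const_mul b)]
    refine integral_mono_ae (hint _) (((hint G).const_mul a).add ((hint H).const_mul b)) ?_
    filter_upwards [Lp.coeFn_add (a • G) (b • H), Lp.coeFn_smul a G, Lp.coeFn_smul b H]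
      with x h1 h2 h3
    simp only [h1, Pi.add_apply, h2, h3, Pi.smul_apply, mdot_add_right, mdot_smul_right]
    have hFc := hFconv.2
    have := @hFc (G x) (Set.mem_univ _) (H x) (Set.mem_univ _) a b ha hb hab
    simp only [smul_eq_mul] at this
    linarith
  have hJcont : Continuous J := by
    obtain ⟨C, hC⟩ := hTb
    set D := K + (N * n : ℝ) * |C| with hD
    have hD0 : 0 ≤ D := by positivity
    have hle : ∀ G H, J G - J H ≤ D * ‖G - H‖ := by
      intro G H
      rw [hJ]
      simp only
      rw [← integral_sub (hint G) (hint H), L1.norm_eq_integral_norm, ← integral_const_mul]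
      refine integral_mono_ae ((hint G).sub (hint H))
        ((L1.integrable_coeFn _).norm.const_mul _) ?_
      filter_upwards [hC, Lp.coeFn_sub G H] with x h1 h2
      rw [h2, Pi.sub_apply]
      have e : mdot (T x) (G x) = mdot (T x) (H x) + mdot (T x) (G x - H x) := by
        rw [← mdot_add_right]; congr 1; abel
      have h3 := (abs_le.1 (mdot_le_norm (T x) (G x - H x))).1
      have h4 := hlip (H x) (G x)
      have h5 : (N * n : ℝ) * ‖T x‖ * ‖G x - H x‖ ≤ (N * n : ℝ) * |C| * ‖G x - H x‖ :=
        mul_le_mul_of_nonneg_right (mul_le_mul_of_nonneg_left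
          ((norm_le_mnorm _).trans (h1.trans (le_abs_self C))) (by positivity)) (norm_nonneg _)
      rw [hD, add_mul, e]
      linarith
    have : LipschitzWith (Real.toNNReal D) J := by
      refine LipschitzWith.of_le_add_mul _ fun G H => ?_
      rw [Real.coe_toNNReal D hD0, dist_eq_norm]
      linarith [hle G H]
    exact this.continuous
  obtain ⟨l, hl0, hl⟩ := hb_sandwich J hJconv hJcont V m hm
  obtain ⟨χ, hχm, hχb, hχ⟩ := l1_dual_vec μ l
  refine ⟨χ, hχm, hχb, fun G hG => by rw [← hχ, hl0 G hG], ?_⟩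
  have hχb' : ∃ C : ℝ, ∀ᵐ x ∂μ, mnorm (χ x) ≤ C := hχb.imp fun C h => .of_forall h
  have hzb : ∃ C : ℝ, ∀ᵐ x ∂μ, mnorm (T x + χ x) ≤ C := by
    obtain ⟨C1, h1⟩ := hTb
    obtain ⟨C2, h2⟩ := hχb
    refine ⟨(N * n + 1 : ℝ) * (C1 + C2), ?_⟩
    filter_upwards [h1] with x hx
    refine (mnorm_le_norm _).trans (mul_le_mul_of_nonneg_left ?_ (by positivity))
    refine (norm_add_le _ _).trans (add_le_add ?_ ?_)
    · exact (norm_le_mnorm _).trans hx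
    · exact (norm_le_mnorm _).trans (h2 x)
  refine lintegral_Fstar_le hFc hFpos hlip (hT.add hχm.aestronglyMeasurable) hzb _ fun G hG => ?_
  set g : Lp (Fin N → Fin n → ℝ) 1 μ := hG.toL1 G with hg
  have hgG : g =ᵐ[μ] G := hG.coeFn_toL1
  have h1 := hl g
  rw [hχ g] at h1
  simp only [hJ] at h1
  have e1 : ∫ x, mdot (χ x) (g x) ∂μ = ∫ x, mdot (χ x) (G x) ∂μ :=
    integral_congr_ae (by filter_upwards [hgG] with x hx; rw [hx])
  have e2 : ∫ x, (F (g x) - mdot (T x) (g x)) ∂μ = ∫ x, (F (G x) - mdot (T x) (G x)) ∂μ :=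
    integral_congr_ae (by filter_upwards [hgG] with x hx; rw [hx])
  rw [e1, e2] at h1
  have i1 := integrable_mdot hχm.aestronglyMeasurable hχb' hG
  have i2 : Integrable (fun x => F (G x) - mdot (T x) (G x)) μ :=
    (integrable_F hFc hFpos hlip hG).sub (integrable_mdot hT hTb hG)
  have e3 : ∫ x, (mdot (T x + χ x) (G x) - F (G x) + F 0) ∂μ =
      ∫ x, (mdot (χ x) (G x) - (F (G x) - mdot (T x) (G x)) + F 0) ∂μ := by
    refine integral_congr_ae (.of_forall fun x => ?_)
    simp only [mdot_add_left]; ring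
  simp only [Pi.add_apply]
  have i3 : Integrable (fun x => mdot (χ x) (G x) - (F (G x) - mdot (T x) (G x))) μ := i1.sub i2
  rw [e3, integral_add i3 (integrable_const _), integral_sub i1 i2, integral_const]
  simp only [smul_eq_mul]
  linarith

theorem fderiv_of_max {N n : ℕ} {F : (Fin N → Fin n → ℝ) → ℝ} (hF : Differentiable ℝ F)
    {y z : Fin N → Fin n → ℝ} (h : ∀ w, mdot y w - F w ≤ mdot y z - F z) (v : Fin N → Fin n → ℝ) :
    fderiv ℝ F z v = mdot y v := by
  let l : (Fin N → Fin n → ℝ) →ₗ[ℝ] ℝ :=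
    { toFun := fun w => mdot y w
      map_add' := fun a b => mdot_add_right y a b
      map_smul' := fun c a => by simp [mdot_smul_right] }
  let L := LinearMap.toContinuousLinearMap l
  have hmax : IsLocalMax (fun w => L w - F w) z := .of_forall h
  have hd : HasFDerivAt (fun w => L w - F w) (L - fderiv ℝ F z) z :=
    L.hasFDerivAt.sub (hF z).hasFDerivAt
  have := hmax.hasFDerivAt_eq_zero hd
  have h2 : L = fderiv ℝ F z := sub_eq_zero.1 this
  rw [← h2]
  rfl

theorem unique_dual {α : Type*} [MeasurableSpace α] {μ : Measure α} [IsFiniteMeasure μ]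
    {N n : ℕ} {F : (Fin N → Fin n → ℝ) → ℝ} (hF : Differentiable ℝ F)
    (z : Fin 2 → α → Fin N → Fin n → ℝ) (hz : ∀ j, AEStronglyMeasurable (z j) μ)
    (D : ℕ → α → Fin N → Fin n → ℝ) (hD : ∀ k, Integrable (D k) μ) (B a : ℝ)
    (hB : ∀ k, ∫ x, ‖D k x‖ ∂μ ≤ B)
    (hi : ∀ j k, Integrable (fun x => mdot (z j x) (D k x) - F (D k x) + F 0) μ)
    (ha : 0 ≤ a) (hs : ∀ j, ∫⁻ x, FstarShift F (z j x) ∂μ ≤ ENNReal.ofReal a)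
    (hlow : ∀ (j : Fin 2) (k : ℕ), a - 1 / ((k : ℝ) + 1) ≤ ∫ x, (mdot (z j x) (D k x) - F (D k x) + F 0) ∂μ) :
    z 0 =ᵐ[μ] z 1 := by
  have hFc : Continuous F := hF.continuous
  have hsm : ∀ j, AEMeasurable (fun x => FstarShift F (z j x)) μ := fun j =>
    (measurable_Fstar hFc).comp_aemeasurable (hz j).aemeasurable
  have hsf : ∀ j, ∫⁻ x, FstarShift F (z j x) ∂μ ≠ ⊤ := fun j =>
    ((hs j).trans_lt ENNReal.ofReal_lt_top).ne
  have hfin : ∀ᵐ x ∂μ, ∀ j, FstarShift F (z j x) < ⊤ :=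
    ae_all_iff.2 fun j => ae_lt_top' (hsm j) (hsf j)
  have hfi : ∀ j, Integrable (fun x => (FstarShift F (z j x)).toReal) μ := fun j =>
    integrable_toReal_of_lintegral_ne_top (hsm j) (hsf j)
  have hfa : ∀ j, ∫ x, (FstarShift F (z j x)).toReal ∂μ ≤ a := by
    intro j
    rw [integral_toReal (hsm j) (by filter_upwards [hfin] with x hx using hx j)]
    exact ENNReal.toReal_le_of_le_ofReal ha (hs j)
  set h : Fin 2 → ℕ → α → ℝ := fun j k x =>
    (FstarShift F (z j x)).toReal - (mdot (z j x) (D k x) - F (D k x) + F 0) with hh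
  have hle : ∀ x, (∀ j, FstarShift F (z j x) < ⊤) → ∀ j w,
      mdot (z j x) w - F w + F 0 ≤ (FstarShift F (z j x)).toReal := by
    intro x hx j w
    have : ENNReal.ofReal (mdot (z j x) w - F w + F 0) ≤ FstarShift F (z j x) :=
      le_iSup (fun w => ENNReal.ofReal (mdot (z j x) w - F w + F 0)) w
    exact (ENNReal.ofReal_le_iff_le_toReal (hx j).ne).1 this
  have hhi : ∀ j k, Integrable (h j k) μ := fun j k => (hfi j).sub (hi j k)
  have hhint : ∀ j k, ∫ x, h j k x ∂μ ≤ 1 / ((k : ℝ) + 1) := by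
    intro j k
    simp only [hh]
    rw [integral_sub (hfi j) (hi j k)]
    linarith [hfa j, hlow j k]
  set p : ℕ → α → ℝ := fun k x => ‖D k x‖ + ((k : ℝ) + 1) * (h 0 k x + h 1 k x) with hp
  have hpi : ∀ k, Integrable (p k) μ := fun k =>
    (hD k).norm.add (((hhi 0 k).add (hhi 1 k)).const_mul _)
  have hpint : ∀ k, ∫ x, p k x ∂μ ≤ B + 2 := by
    intro k
    have e : ∫ x, p k x ∂μ = ∫ x, ‖D k x‖ ∂μ +
        ((k : ℝ) + 1) * (∫ x, h 0 k x ∂μ + ∫ x, h 1 k x ∂μ) := by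
      have i4 : Integrable (fun x => ((k : ℝ) + 1) * (h 0 k x + h 1 k x)) μ :=
        ((hhi 0 k).add (hhi 1 k)).const_mul _
      rw [← integral_add (hhi 0 k) (hhi 1 k), ← integral_const_mul,
        ← integral_add (hD k).norm i4]
    rw [e]
    have hk : (0:ℝ) < (k : ℝ) + 1 := by positivity
    have h2 := mul_le_mul_of_nonneg_left (add_le_add (hhint 0 k) (hhint 1 k)) hk.le
    have e2 : ((k : ℝ) + 1) * (1 / ((k : ℝ) + 1) + 1 / ((k : ℝ) + 1)) = 2 := by field_simp; norm_num
    linarith [hB k]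
  have hp0 : ∀ k, 0 ≤ᵐ[μ] p k := by
    intro k
    filter_upwards [hfin] with x hx
    have h1 := hle x hx 0 (D k x)
    have h2 := hle x hx 1 (D k x)
    have : 0 ≤ h 0 k x + h 1 k x := by simp only [hh]; linarith
    simp only [hp, Pi.zero_apply]
    positivity
  have hfatou : ∫⁻ x, liminf (fun k => ENNReal.ofReal (p k x)) atTop ∂μ ≤ ENNReal.ofReal (B + 2) := by
    refine (lintegral_liminf_le' fun k => (hpi k).1.aemeasurable.ennreal_ofReal).trans ?_
    refine liminf_le_of_frequently_le' (.of_forall fun k => ?_)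
    rw [← ofReal_integral_eq_lintegral_ofReal (hpi k) (hp0 k)]
    exact ENNReal.ofReal_le_ofReal (hpint k)
  have hlim : ∀ᵐ x ∂μ, liminf (fun k => ENNReal.ofReal (p k x)) atTop < ⊤ :=
    ae_lt_top' (by
      simp only [Filter.liminf_eq_iSup_iInf_of_nat]
      exact AEMeasurable.iSup fun k => AEMeasurable.biInf _ (Set.to_countable _)
        fun i _ => (hpi i).1.aemeasurable.ennreal_ofReal)
      (hfatou.trans_lt ENNReal.ofReal_lt_top).ne
  filter_upwards [hlim, hfin] with x hx1 hx2
  obtain ⟨b, hb1, hb2⟩ := exists_between hx1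
  have hfreq : ∃ᶠ k in atTop, ENNReal.ofReal (p k x) < b := frequently_lt_of_liminf_lt (by isBoundedDefault) hb1
  have hfreq2 : ∃ᶠ k in atTop, p k x ≤ b.toReal := hfreq.mono fun k hk =>
    (ENNReal.ofReal_le_iff_le_toReal hb2.ne).1 hk.le
  have hh0 : ∀ j k, 0 ≤ h j k x := fun j k => by
    have := hle x hx2 j (D k x); simp only [hh]; linarith
  obtain ⟨φ, hφ, hφb⟩ := extraction_of_frequently_atTop hfreq2
  have hDb : ∀ k, D (φ k) x ∈ Metric.closedBall (0 : Fin N → Fin n → ℝ) b.toReal := by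
    intro k
    rw [mem_closedBall_zero_iff]
    have h1 := hφb k
    simp only [hp] at h1
    have h2 : 0 ≤ ((φ k : ℝ) + 1) * (h 0 (φ k) x + h 1 (φ k) x) := by
      have := hh0 0 (φ k); have := hh0 1 (φ k); positivity
    linarith
  obtain ⟨w, _, ψ, hψ, hw⟩ := (isCompact_closedBall _ _).tendsto_subseq hDb
  have hhb : ∀ j k, h j (φ k) x ≤ b.toReal * (1 / ((k : ℝ) + 1)) := by
    intro j k
    have h1 := hφb k
    simp only [hp] at h1
    have h3 : h j (φ k) x ≤ h 0 (φ k) x + h 1 (φ k) x := by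
      have := hh0 0 (φ k); have := hh0 1 (φ k)
      fin_cases j <;> simp <;> assumption
    have hkk : (k : ℝ) + 1 ≤ (φ k : ℝ) + 1 := by
      have : (k : ℝ) ≤ φ k := by exact_mod_cast hφ.id_le k
      linarith
    have h4 : ((k : ℝ) + 1) * h j (φ k) x ≤ ((φ k : ℝ) + 1) * (h 0 (φ k) x + h 1 (φ k) x) :=
      mul_le_mul hkk h3 (hh0 j _) (by positivity)
    rw [mul_one_div, le_div_iff₀ (by positivity)]
    have := norm_nonneg (D (φ k) x)
    linarith
  have hhlim : ∀ j, Tendsto (fun k => h j (φ (ψ k)) x) atTop (𝓝 0) := by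
    intro j
    have h1 : Tendsto (fun k => h j (φ k) x) atTop (𝓝 0) := by
      refine squeeze_zero (fun k => hh0 j _) (hhb j) ?_
      have := (tendsto_one_div_add_atTop_nhds_zero_nat (𝕜 := ℝ)).const_mul b.toReal
      simpa using this
    exact h1.comp hψ.tendsto_atTop
  have hmax : ∀ j v, mdot (z j x) v - F v ≤ mdot (z j x) w - F w := by
    intro j v
    have hc : Continuous fun u : Fin N → Fin n → ℝ => mdot (z j x) u - F u + F 0 := by
      have h1 : Continuous fun w : Fin N → Fin n → ℝ => mdot (z j x) w := by unfold mdot; fun_prop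
      exact (h1.sub hFc).add continuous_const
    have h1 : Tendsto (fun k => h j (φ (ψ k)) x) atTop
        (𝓝 ((FstarShift F (z j x)).toReal - (mdot (z j x) w - F w + F 0))) :=
      tendsto_const_nhds.sub ((hc.tendsto w).comp hw)
    have h2 := tendsto_nhds_unique h1 (hhlim j)
    have h3 := hle x hx2 j v
    linarith
  have hd : ∀ v, mdot (z 0 x) v = mdot (z 1 x) v := fun v => by
    rw [← fderiv_of_max hF (hmax 0), ← fderiv_of_max hF (hmax 1)]
  ext a i
  have := hd (basisMat a i)
  have hbm : ∀ A : Fin N → Fin n → ℝ, mdot A (basisMat a i) = A a i := by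
    intro A
    simp only [mdot, basisMat]
    rw [Finset.sum_eq_single a, Finset.sum_eq_single i]
    · simp
    · intro j _ hj; simp [hj]
    · simp
    · intro j _ hj; simp [hj]
    · simp
  rwa [hbm, hbm] at this

theorem weak_int {n N : ℕ} {Ω : Set (EVec n)} {u : EVec n → Fin N → ℝ}
    {Du : EVec n → Fin N → Fin n → ℝ} (h : HasWeakDerivOn Ω u Du)
    {φ : EVec n → ℝ} (hφ : ContDiff ℝ 1 φ) (hc : HasCompactSupport φ) (a : Fin N) (i : Fin n) :
    Integrable (fun x => u x a * fderiv ℝ φ x (EuclideanSpace.single i 1)) (volume.restrict Ω) ∧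
    Integrable (fun x => Du x a i * φ x) (volume.restrict Ω) := by
  have h1 : Integrable (fun x => u x a) (volume.restrict Ω) := h.1.eval a
  have h2 : Integrable (fun x => Du x a i) (volume.restrict Ω) := (h.2.1.eval a).eval i
  have c1 : Continuous fun x => fderiv ℝ φ x (EuclideanSpace.single i 1) :=
    (hφ.continuous_fderiv one_ne_zero).clm_apply continuous_const
  have s1 : HasCompactSupport fun x => fderiv ℝ φ x (EuclideanSpace.single i 1) :=
    hc.fderiv_apply ℝ _
  obtain ⟨C1, hC1⟩ := c1.bounded_above_of_compact_support s1
  obtain ⟨C2, hC2⟩ := hφ.continuous.bounded_above_of_compact_support hc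
  exact ⟨h1.mul_bdd c1.aestronglyMeasurable (.of_forall hC1),
    h2.mul_bdd hφ.continuous.aestronglyMeasurable (.of_forall hC2)⟩

theorem weak_zero {n N : ℕ} (Ω : Set (EVec n)) :
    HasWeakDerivOn Ω (fun _ _ => (0:ℝ)) (fun _ (_ : Fin N) (_ : Fin n) => (0:ℝ)) :=
  ⟨integrableOn_zero, integrableOn_zero, by intros; simp⟩

theorem weak_add {n N : ℕ} {Ω : Set (EVec n)} {u v : EVec n → Fin N → ℝ}
    {Du Dv : EVec n → Fin N → Fin n → ℝ} (h : HasWeakDerivOn Ω u Du) (h' : HasWeakDerivOn Ω v Dv) :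
    HasWeakDerivOn Ω (u + v) (Du + Dv) := by
  refine ⟨h.1.add h'.1, h.2.1.add h'.2.1, fun φ hφ hc hs a i => ?_⟩
  obtain ⟨i1, i2⟩ := weak_int h hφ hc a i
  obtain ⟨j1, j2⟩ := weak_int h' hφ hc a i
  simp only [Pi.add_apply, add_mul]
  rw [integral_add i1 j1, integral_add i2 j2, h.2.2 φ hφ hc hs a i, h'.2.2 φ hφ hc hs a i]
  ring

theorem weak_smul {n N : ℕ} {Ω : Set (EVec n)} {u : EVec n → Fin N → ℝ}
    {Du : EVec n → Fin N → Fin n → ℝ} (c : ℝ) (h : HasWeakDerivOn Ω u Du) :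
    HasWeakDerivOn Ω (c • u) (c • Du) := by
  refine ⟨h.1.smul c, h.2.1.smul c, fun φ hφ hc hs a i => ?_⟩
  simp only [Pi.smul_apply, smul_eq_mul, mul_assoc]
  rw [integral_const_mul, integral_const_mul, h.2.2 φ hφ hc hs a i]
  ring

/-- the space of weak gradients inside `L¹`. -/
def gradSpace {n : ℕ} (N : ℕ) (Ω : Set (EVec n)) :
    Submodule ℝ (Lp (Fin N → Fin n → ℝ) 1 (volume.restrict Ω)) where
  carrier := {G | ∃ w Dw, HasWeakDerivOn Ω w Dw ∧ G =ᵐ[volume.restrict Ω] Dw}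
  zero_mem' := ⟨_, _, weak_zero Ω, Lp.coeFn_zero _ _ _⟩
  add_mem' := by
    rintro G H ⟨w, Dw, h, e⟩ ⟨w', Dw', h', e'⟩
    exact ⟨_, _, weak_add h h', (Lp.coeFn_add G H).trans (e.add e')⟩
  smul_mem' := by
    rintro c G ⟨w, Dw, h, e⟩
    exact ⟨_, _, weak_smul c h, (Lp.coeFn_smul c G).trans (e.const_smul c)⟩

/-- **Remark 4.12 (duality correspondence).** Under the coerciveness condition,
`inf_{w∈W^{1,1}(Ω;ℝ^N)} ∫_Ω (F(∇w) − T₀·∇w) dx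
  = sup_{χ∈L^∞_⊥(Ω;ℝ^{N×n})} (−∫_Ω F*(T₀+χ) dx)`,
and the dual problem admits a unique solution. -/
theorem duality_correspondence
    {n N : ℕ} (Ω : Set (EVec n))
    (hΩ : IsLipschitzDomain Ω) (hΩbdd : Bornology.IsBounded Ω)
    (ν L : ℝ) (hν : 0 < ν) (hνL : ν ≤ L)
    (F : (Fin N → Fin n → ℝ) → ℝ)
    (hFpos : ∀ z, 0 ≤ F z)
    (hFC1 : ContDiff ℝ 1 F)
    (hFconv : ConvexOn ℝ Set.univ F)
    (hFgrowth : ∀ z, ν * mnorm z - L ≤ F z ∧ F z ≤ L * (1 + mnorm z))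
    (Finf : (Fin N → Fin n → ℝ) → ℝ)
    (hFinf : ∀ z, Filter.Tendsto (fun t : ℝ => t * F (t⁻¹ • z))
      (nhdsWithin 0 (Set.Ioi 0)) (nhds (Finf z)))
    (T₀ : EVec n → Fin N → Fin n → ℝ)
    (hTmeas : AEStronglyMeasurable T₀ (volume.restrict Ω))
    (hTbdd : ∃ M : ℝ, ∀ x ∈ Ω, mnorm (T₀ x) ≤ M)
    -- coerciveness: `ess inf_{x∈Ω} min_{|ξ|=1} (F^∞(ξ) − T₀(x)·ξ) > 0`
    (hcoerc : ∃ δ₀ : ℝ, 0 < δ₀ ∧ ∀ᵐ x ∂(volume.restrict Ω),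
      ∀ ξ : Fin N → Fin n → ℝ, mnorm ξ = 1 → δ₀ ≤ Finf ξ - mdot (T₀ x) ξ) :
    (⨆ χ : {χ : EVec n → Fin N → Fin n → ℝ // MemLinfPerp Ω χ},
        Rdual Ω F T₀ χ.1) =
      ((sInf {r : ℝ | ∃ (w : EVec n → Fin N → ℝ)
        (Dw : EVec n → Fin N → Fin n → ℝ),
        HasWeakDerivOn Ω w Dw ∧ r = FFgen Ω F T₀ Dw} : ℝ) : EReal) ∧
    ∃ σ : EVec n → Fin N → Fin n → ℝ, MemLinfPerp Ω σ ∧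
      (∀ χ : EVec n → Fin N → Fin n → ℝ, MemLinfPerp Ω χ →
        Rdual Ω F T₀ χ ≤ Rdual Ω F T₀ σ) ∧
      (∀ χ : EVec n → Fin N → Fin n → ℝ, MemLinfPerp Ω χ →
        Rdual Ω F T₀ χ = Rdual Ω F T₀ σ → χ =ᵐ[volume.restrict Ω] σ) := by
  have hΩo : IsOpen Ω := hΩ.1
  set μ : Measure (EVec n) := volume.restrict Ω with hμ
  have : IsFiniteMeasure μ := ⟨by rw [hμ, Measure.restrict_apply_univ]; exact hΩbdd.measure_lt_top⟩
  have hmem : ∀ᵐ x ∂μ, x ∈ Ω := ae_restrict_mem hΩo.measurableSet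
  have hμr : μ.real Set.univ = (volume Ω).toReal := by
    rw [Measure.real, hμ, Measure.restrict_apply_univ]
  have hL : 0 ≤ L := hν.le.trans hνL
  have hFd : Differentiable ℝ F := hFC1.differentiable one_ne_zero
  have hFc : Continuous F := hFC1.continuous
  obtain ⟨K, hK, hlip⟩ := F_lip hL hFpos hFconv (fun z => (hFgrowth z).2)
  obtain ⟨M, hM⟩ := hTbdd
  have hTb : ∃ C : ℝ, ∀ᵐ x ∂μ, mnorm (T₀ x) ≤ C := ⟨M, hmem.mono fun x hx => hM x hx⟩
  obtain ⟨δ, hδ, hco⟩ := hcoerc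
  obtain ⟨c, C, hc, hcC⟩ := F_coerc hFpos hK hlip hFinf (T₀ := T₀) (M := M) hδ
  have hlow : ∀ᵐ x ∂μ, ∀ z, c * ‖z‖ - C ≤ F z - mdot (T₀ x) z := by
    filter_upwards [hmem, hco] with x h1 h2 using hcC x (hM x h1) h2
  have hint : ∀ {G : EVec n → Fin N → Fin n → ℝ}, Integrable G μ →
      Integrable (fun x => F (G x) - mdot (T₀ x) (G x)) μ := fun hG =>
    (integrable_F hFc hFpos hlip hG).sub (integrable_mdot hTmeas hTb hG)
  have hFFlow : ∀ {G : EVec n → Fin N → Fin n → ℝ}, Integrable G μ →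
      c * ∫ x, ‖G x‖ ∂μ - C * μ.real Set.univ ≤ FFgen Ω F T₀ G := by
    intro G hG
    have i1 : Integrable (fun x => c * ‖G x‖) μ := hG.norm.const_mul c
    have : ∫ x, (c * ‖G x‖ - C) ∂μ ≤ FFgen Ω F T₀ G :=
      integral_mono_ae (i1.sub (integrable_const C)) (hint hG) (by
        filter_upwards [hlow] with x hx using hx _)
    rw [integral_sub i1 (integrable_const C), integral_const_mul, integral_const, smul_eq_mul] at this
    linarith
  set S : Set ℝ := {r : ℝ | ∃ (w : EVec n → Fin N → ℝ)
        (Dw : EVec n → Fin N → Fin n → ℝ),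
        HasWeakDerivOn Ω w Dw ∧ r = FFgen Ω F T₀ Dw} with hS
  have hSne : S.Nonempty := ⟨_, _, _, weak_zero Ω, rfl⟩
  have hSbdd : BddBelow S := by
    refine ⟨-(C * μ.real Set.univ), ?_⟩
    rintro r ⟨w, Dw, hw, rfl⟩
    have h1 := hFFlow hw.2.1
    have h2 : 0 ≤ c * ∫ x, ‖Dw x‖ ∂μ :=
      mul_nonneg hc.le (integral_nonneg fun x => norm_nonneg _)
    linarith
  set m : ℝ := sInf S with hm
  have hmle : ∀ {w : EVec n → Fin N → ℝ} {Dw : EVec n → Fin N → Fin n → ℝ},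
      HasWeakDerivOn Ω w Dw → m ≤ FFgen Ω F T₀ Dw := fun {w Dw} hw =>
    csInf_le hSbdd ⟨w, Dw, hw, rfl⟩
  set a : ℝ := F 0 * (volume Ω).toReal - m with ha_def
  have ha : 0 ≤ a := by
    have h1 := hmle (weak_zero (N := N) Ω)
    have h2 : FFgen Ω F T₀ (fun _ (_ : Fin N) (_ : Fin n) => (0:ℝ)) = F 0 * (volume Ω).toReal := by
      have e : ∀ x, F (fun (_ : Fin N) (_ : Fin n) => (0:ℝ)) -
          mdot (T₀ x) (fun (_ : Fin N) (_ : Fin n) => (0:ℝ)) = F 0 := by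
        intro x
        have : mdot (T₀ x) (fun (_ : Fin N) (_ : Fin n) => (0:ℝ)) = 0 := by simp [mdot]
        rw [this, sub_zero]; rfl
      simp only [FFgen, e]
      rw [integral_const, smul_eq_mul, hμr, mul_comm]
    rw [h2] at h1
    linarith
  -- general facts about admissible dual fields
  have hzb : ∀ {χ : EVec n → Fin N → Fin n → ℝ}, MemLinfPerp Ω χ →
      ∃ C : ℝ, ∀ᵐ x ∂μ, mnorm (T₀ x + χ x) ≤ C := by
    rintro χ ⟨_, ⟨C2, h2⟩, _⟩
    refine ⟨(N * n + 1 : ℝ) * (M + C2), ?_⟩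
    filter_upwards [hmem] with x hx
    refine (mnorm_le_norm _).trans (mul_le_mul_of_nonneg_left ?_ (by positivity))
    refine (norm_add_le _ _).trans (add_le_add ?_ ?_)
    · exact (norm_le_mnorm _).trans (hM x hx)
    · exact (norm_le_mnorm _).trans (h2 x hx)
  have hphi : ∀ {χ : EVec n → Fin N → Fin n → ℝ}, MemLinfPerp Ω χ →
      ∀ {w : EVec n → Fin N → ℝ} {Dw : EVec n → Fin N → Fin n → ℝ}, HasWeakDerivOn Ω w Dw →
      Integrable (fun x => mdot (T₀ x + χ x) (Dw x) - F (Dw x) + F 0) μ ∧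
      ∫ x, (mdot (T₀ x + χ x) (Dw x) - F (Dw x) + F 0) ∂μ =
        F 0 * (volume Ω).toReal - FFgen Ω F T₀ Dw := by
    intro χ hχ w Dw hw
    have hD : Integrable Dw μ := hw.2.1
    refine ⟨integrable_phi hFc hFpos hlip (hTmeas.add hχ.1) (hzb hχ) hD, ?_⟩
    have hχb : ∃ C : ℝ, ∀ᵐ x ∂μ, mnorm (χ x) ≤ C := hχ.2.1.imp fun C h => hmem.mono fun x hx => h x hx
    have i1 := integrable_mdot hχ.1 hχb hD
    have i2 := hint hD
    have i3 : Integrable (fun x => mdot (χ x) (Dw x) - (F (Dw x) - mdot (T₀ x) (Dw x))) μ := i1.sub i2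
    have e3 : ∫ x, (mdot (T₀ x + χ x) (Dw x) - F (Dw x) + F 0) ∂μ =
        ∫ x, (mdot (χ x) (Dw x) - (F (Dw x) - mdot (T₀ x) (Dw x)) + F 0) ∂μ := by
      refine integral_congr_ae (.of_forall fun x => ?_)
      simp only [mdot_add_left]; ring
    rw [e3, integral_add i3 (integrable_const _), integral_sub i1 i2, integral_const,
      smul_eq_mul, hμr, hχ.2.2 w Dw hw, FFgen]
    ring
  have hRle : ∀ {χ : EVec n → Fin N → Fin n → ℝ}, MemLinfPerp Ω χ →
      ENNReal.ofReal a ≤ ∫⁻ x, FstarShift F (T₀ x + χ x) ∂μ := by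
    intro χ hχ
    by_cases hI : ∫⁻ x, FstarShift F (T₀ x + χ x) ∂μ = ⊤
    · rw [hI]; exact le_top
    rw [ENNReal.ofReal_le_iff_le_toReal hI]
    have : F 0 * (volume Ω).toReal - (∫⁻ x, FstarShift F (T₀ x + χ x) ∂μ).toReal ≤ m := by
      refine le_csInf hSne ?_
      rintro r ⟨w, Dw, hw, rfl⟩
      obtain ⟨h1, h2⟩ := hphi hχ hw
      have h3 := ofReal_integral_phi_le h1
      rw [h2, ENNReal.ofReal_le_iff_le_toReal hI] at h3
      linarith
    linarith
  have hRval : ∀ {χ : EVec n → Fin N → Fin n → ℝ},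
      ∫⁻ x, FstarShift F (T₀ x + χ x) ∂μ = ENNReal.ofReal a → Rdual Ω F T₀ χ = (m : EReal) := by
    intro χ h
    rw [Rdual, h, EReal.coe_ennreal_ofReal, max_eq_left ha, ← EReal.coe_sub]
    congr 1
    rw [ha_def]; ring
  have hRm : ∀ {χ : EVec n → Fin N → Fin n → ℝ}, MemLinfPerp Ω χ →
      Rdual Ω F T₀ χ ≤ (m : EReal) := by
    intro χ hχ
    have e : (m : EReal) = ((F 0 * (volume Ω).toReal : ℝ) : EReal) -
        ((ENNReal.ofReal a : ℝ≥0∞) : EReal) := by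
      rw [EReal.coe_ennreal_ofReal, max_eq_left ha, ← EReal.coe_sub]
      congr 1
      rw [ha_def]; ring
    rw [e, Rdual]
    exact EReal.sub_le_sub le_rfl (EReal.coe_ennreal_le_coe_ennreal_iff.2 (hRle hχ))
  have hRinv : ∀ {χ : EVec n → Fin N → Fin n → ℝ}, Rdual Ω F T₀ χ = (m : EReal) →
      ∫⁻ x, FstarShift F (T₀ x + χ x) ∂μ ≤ ENNReal.ofReal a := by
    intro χ h
    rw [Rdual] at h
    by_cases hI : ∫⁻ x, FstarShift F (T₀ x + χ x) ∂μ = ⊤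
    · rw [hI] at h
      simp at h
    · rw [← ENNReal.ofReal_toReal hI, EReal.coe_ennreal_ofReal,
        max_eq_left ENNReal.toReal_nonneg, ← EReal.coe_sub, EReal.coe_eq_coe_iff] at h
      rw [← ENNReal.ofReal_toReal hI]
      refine ENNReal.ofReal_le_ofReal ?_
      rw [ha_def]; linarith
  obtain ⟨σ, hσm, ⟨Cσ, hσb⟩, hσp, hσI⟩ := exists_dual hFc hFconv hFpos hK hlip hTmeas hTb
    (gradSpace N Ω) m (by
      rintro G ⟨w, Dw, hw, e⟩
      refine (hmle hw).trans_eq (integral_congr_ae ?_)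
      filter_upwards [e] with x hx
      rw [hx])
  have hσ : MemLinfPerp Ω σ := by
    refine ⟨hσm.aestronglyMeasurable, ⟨Cσ, fun x _ => hσb x⟩, fun w Dw hw => ?_⟩
    have hD : Integrable Dw μ := hw.2.1
    have h1 := hσp (hD.toL1 Dw) ⟨w, Dw, hw, hD.coeFn_toL1⟩
    rw [← h1]
    refine integral_congr_ae ?_
    filter_upwards [hD.coeFn_toL1] with x hx
    rw [hx]
  rw [hμr] at hσI
  have hRσ : Rdual Ω F T₀ σ = (m : EReal) := hRval (le_antisymm hσI (hRle hσ))
  refine ⟨le_antisymm (iSup_le fun χ => hRm χ.2) ?_, σ, hσ, fun χ hχ => ?_, fun χ hχ he => ?_⟩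
  · rw [← hRσ]
    exact le_iSup (fun χ : {χ : EVec n → Fin N → Fin n → ℝ // MemLinfPerp Ω χ} =>
      Rdual Ω F T₀ χ.1) ⟨σ, hσ⟩
  · rw [hRσ]; exact hRm hχ
  · rw [hRσ] at he
    have hseq : ∀ k : ℕ, ∃ Dw : EVec n → Fin N → Fin n → ℝ, (∃ w, HasWeakDerivOn Ω w Dw) ∧
        FFgen Ω F T₀ Dw < m + 1 / ((k : ℝ) + 1) := by
      intro k
      have hk : (0:ℝ) < 1 / ((k : ℝ) + 1) := by positivity
      obtain ⟨r, ⟨w, Dw, hw, rfl⟩, hr⟩ := Real.lt_sInf_add_pos hSne hk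
      exact ⟨Dw, ⟨w, hw⟩, hr⟩
    choose D hDw hDm using hseq
    choose w hw using hDw
    have hperp : ∀ j : Fin 2, MemLinfPerp Ω ((![χ, σ] : Fin 2 → _) j) := by
      intro j; fin_cases j
      · exact hχ
      · exact hσ
    have key := unique_dual (μ := μ) hFd (fun j x => T₀ x + (![χ, σ] : Fin 2 → _) j x)
      (fun j => hTmeas.add (hperp j).1) D (fun k => (hw k).2.1)
      ((m + 1 + C * μ.real Set.univ) / c) a
      (fun k => by
        rw [le_div_iff₀ hc]
        have h1 := hFFlow (hw k).2.1
        have h2 := hDm k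
        have h3 : 1 / ((k : ℝ) + 1) ≤ 1 := by
          rw [div_le_one (by positivity)]
          have : (0:ℝ) ≤ k := Nat.cast_nonneg k
          linarith
        linarith)
      (fun j k => (hphi (hperp j) (hw k)).1) ha
      (fun j => by
        fin_cases j
        · exact hRinv he
        · exact hσI)
      (fun j k => by
        rw [(hphi (hperp j) (hw k)).2, ha_def]
        have := hDm k
        linarith)
    filter_upwards [key] with x hx
    exact add_left_cancel hx
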